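/- Let p be prime and let t : Fin α → ℤ be arbitrary. Consider the (α+2)×(α+2) symmetric integer matrix A (reduced modulo p) whose first two rows are (0, 0, t₁, t₂, …, t_α) and (0, 0, -t₁, -t₂, …, -t_α), with the remaining entries arbitrary subject to symmetry. Then over ZMod p, every (α+1)×(α+1) minor of A obtained by deleting one row and one column vanishes provided additionally all row sums of A are zero in ZMod p. -/

import Mathlib

/-! The all-ones vector lies in the kernel of `A` because its row sums vanish, and so does
`v = e₀ + e₁` because, by symmetry, the column with index 1 is the negative of the one with
index 0. For `α ≥ 1` these two vectors are linearly independent, so for each `j` the kernel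
contains a nonzero vector `w = v - v j • 1` with `w j = 0`. Deleting the coordinate `j` from `w`
gives a nonzero kernel vector of every minor omitting column `j`, so these minors vanish
(`det_submatrix_succAbove_eq_zero`). For `α = 0` the two vectors coincide, and `A 0 0 = 0`
forces `A = 0` instead. -/

theorem det_submatrix_succAbove_eq_zero {K : Type*} [Field K] {n : ℕ}
    (A : Matrix (Fin (n + 1)) (Fin (n + 1)) K) (w : Fin (n + 1) → K) (i j : Fin (n + 1))
    (hA : ∀ i, ∑ k, A i k * w k = 0) (hj : w j = 0) (hw : ∃ k, w k ≠ 0) :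
    (A.submatrix i.succAbove j.succAbove).det = 0 := by
  apply Matrix.exists_mulVec_eq_zero_iff.mp
  refine ⟨fun k => w (j.succAbove k), ?_, ?_⟩
  · obtain ⟨k, hk⟩ := hw
    have hkj : k ≠ j := by
      rintro rfl
      exact hk hj
    obtain ⟨l, rfl⟩ := Fin.exists_succAbove_eq hkj
    exact fun h => hk (congrFun h l)
  · funext l
    have h := hA (i.succAbove l)
    rw [Fin.sum_univ_succAbove _ j, hj, mul_zero, zero_add] at h
    exact h

/-- The linking-matrix computation at the end of the proof of Theorem 2: a symmetric
matrix over `ZMod p` with zero row sums whose second row is the negative of its first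
row (and vanishing upper-left 2×2 block) has all of its (one row, one column deleted)
minors equal to zero. -/
theorem all_minors_vanish (p α : ℕ) (hp : p.Prime)
    (A : Matrix (Fin (α + 2)) (Fin (α + 2)) (ZMod p))
    (hsym : A.IsSymm)
    (h00 : A 0 0 = 0)
    (hneg : ∀ j, A 1 j = - A 0 j)
    (hrow : ∀ i, ∑ j, A i j = 0) :
    ∀ i j : Fin (α + 2), (A.submatrix i.succAbove j.succAbove).det = 0 := by
  intro i j
  have : Fact p.Prime := ⟨hp⟩
  rcases α with _ | a
  · have hcol (r : Fin 2) : A r 1 = - A r 0 := by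
      rw [← hsym.apply, hneg, hsym.apply]
    have hzero (r s : Fin 2) : A r s = 0 := by
      fin_cases r <;> fin_cases s <;> simp [hneg, hcol, h00]
    exact Matrix.det_eq_zero_of_row_eq_zero 0 fun _ => hzero _ _
  · let v : Fin (a + 1 + 2) → ZMod p := fun k => if (k : ℕ) < 2 then 1 else 0
    have hv (r) : ∑ k, A r k * v k = 0 := by
      have h1 : A r 1 = - A r 0 := by
        rw [← hsym.apply, hneg, hsym.apply]
      rw [Fin.sum_univ_succ, Fin.sum_univ_succ]
      simp [v, h1]
    refine det_submatrix_succAbove_eq_zero A (fun k => v k - v j) i j (fun r => ?_)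
      (sub_self _) ?_
    · simp only [mul_sub, Finset.sum_sub_distrib, ← Finset.sum_mul, hv, hrow, zero_mul, sub_zero]
    -- `v` takes the value 1 at index 0 and the value 0 at index 2, so it is not constant.
    · by_contra! h
      have h0 := h 0
      have h2 := h ⟨2, by omega⟩
      have hc : v 0 = v ⟨2, by omega⟩ := by
        rw [sub_eq_zero.mp h0, sub_eq_zero.mp h2]
      simp [v] at hc
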